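/- arXiv:2603.17487 — 5 statements merged into one kernel-verified Lean document; each statement's English description precedes it below -/
import Mathlib

section
/- Let q be a complex number and let M(q) be the 6×6 matrix with rows (0, 6q, 0, 0, 24q², 0), (1, 0, 10q, 6q, 0, 24q²), (0, 1, 0, 0, 4q, 0), (0, 1, 0, 0, 2q, 0), (0, 0, 3, 2, 0, 6q), (0, 0, 0, 0, 1, 0). Then the characteristic polynomial of M(q) equals X⁶ − 44q·X⁴ − 16q²·X². -/
open Polynomial

/-- The matrix of small quantum multiplication by the hyperplane class on the
ambient cohomology of a Gushel–Mukai fourfold. -/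
noncomputable def M (q : ℂ) : Matrix (Fin 6) (Fin 6) ℂ :=
  !![0, 6*q, 0,    0,   24*q^2, 0;
     1, 0,   10*q, 6*q, 0,      24*q^2;
     0, 1,   0,    0,   4*q,    0;
     0, 1,   0,    0,   2*q,    0;
     0, 0,   3,    2,   0,      6*q;
     0, 0,   0,    0,   1,      0]

theorem charpoly_M (q : ℂ) :
    (M q).charpoly = X ^ 6 - C (44 * q) * X ^ 4 - C (16 * q ^ 2) * X ^ 2 := by
  have h : (M q).charmatrix =
      !![X, -C (6*q), 0, 0, -C (24*q^2), 0;
         -1, X, -C (10*q), -C (6*q), 0, -C (24*q^2);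
         0, -1, X, 0, -C (4*q), 0;
         0, -1, 0, X, -C (2*q), 0;
         0, 0, -C 3, -C 2, X, -C (6*q);
         0, 0, 0, 0, -1, X] := by
    ext1 i j
    fin_cases i <;> fin_cases j <;> simp [M, Matrix.charmatrix_apply]
  rw [Matrix.charpoly, h]
  simp only [map_mul, map_pow, map_ofNat]
  generalize (C q : ℂ[X]) = c
  simp [Matrix.det_succ_row_zero, Fin.sum_univ_succ, Fin.succAbove]
  ring
end

section
/- Let q be a nonzero complex number and let M(q) be the 6×6 matrix with rows (0, 6q, 0, 0, 24q², 0), (1, 0, 10q, 6q, 0, 24q²), (0, 1, 0, 0, 4q, 0), (0, 1, 0, 0, 2q, 0), (0, 0, 3, 2, 0, 6q), (0, 0, 0, 0, 1, 0), viewed as a linear endomorphism of ℂ⁶. Then the kernel of M(q) is two-dimensional, and it is precisely the span of the two vectors v_α = (−2q, 0, 2, −3, 0, 0) and v_β = (−4q², 0, −2q, 0, 0, 1). -/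
/-- Coordinate vector of α = 2σ₂ − 3σ₁₁ − 2q. -/
noncomputable def vα (q : ℂ) : Fin 6 → ℂ := ![-(2*q), 0, 2, -3, 0, 0]

/-- Coordinate vector of β = 2·pt − 2qσ₂ − 4q². -/
noncomputable def vβ (q : ℂ) : Fin 6 → ℂ := ![-(4*q^2), 0, -(2*q), 0, 0, 1]

theorem ker_M (q : ℂ) (hq : q ≠ 0) :
    Module.finrank ℂ (LinearMap.ker (M q).mulVecLin) = 2 ∧
    LinearMap.ker (M q).mulVecLin = Submodule.span ℂ {vα q, vβ q} := by
  have hker : LinearMap.ker (M q).mulVecLin = Submodule.span ℂ {vα q, vβ q} := by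
    ext x
    rw [LinearMap.mem_ker, Matrix.mulVecLin_apply, Submodule.mem_span_pair]
    constructor
    · intro h
      have h1 := congrFun h 1
      have h3 := congrFun h 3
      have h4 := congrFun h 4
      have h5 := congrFun h 5
      simp [M, Matrix.mulVec, dotProduct, Fin.sum_univ_succ] at h1 h3 h4 h5
      refine ⟨-(x 3) / 3, x 5, ?_⟩
      ext i
      fin_cases i <;> simp [vα, vβ] <;> grind
    · rintro ⟨a, b, rfl⟩
      ext i
      fin_cases i <;> simp [M, vα, vβ, Matrix.mulVec, dotProduct, Fin.sum_univ_succ] <;> ring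
  refine ⟨?_, hker⟩
  have hli : LinearIndependent ℂ ![vα q, vβ q] := by
    rw [LinearIndependent.pair_iff]
    intro a b h
    have h3 := congrFun h 3
    have h5 := congrFun h 5
    simp [vα, vβ] at h3 h5
    exact ⟨h3, h5⟩
  have := finrank_span_eq_card hli
  rw [hker]
  rw [Matrix.range_cons_cons_empty] at this
  simpa using this
end

section
/- Let q be a nonzero complex number and let M(q) be the 6×6 matrix with rows (0, 6q, 0, 0, 24q², 0), (1, 0, 10q, 6q, 0, 24q²), (0, 1, 0, 0, 4q, 0), (0, 1, 0, 0, 2q, 0), (0, 0, 3, 2, 0, 6q), (0, 0, 0, 0, 1, 0), viewed as a linear endomorphism of ℂ⁶. Then M(q) is diagonalizable, the set of its nonzero eigenvalues equals the set of complex numbers λ satisfying λ⁴ = 44q·λ² + 16q², this set has exactly four elements, the eigenspace of each nonzero eigenvalue is one-dimensional, and the eigenspace of the eigenvalue 0 is two-dimensional. -/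
open Polynomial in
lemma p_sep (q : ℂ) (hq : q ≠ 0) :
    (X * (X ^ 4 - C (44 * q) * X ^ 2 - C (16 * q ^ 2)) : ℂ[X]).Separable := by
  have hd : derivative (X * (X ^ 4 - C (44 * q) * X ^ 2 - C (16 * q ^ 2)) : ℂ[X])
      = 5 * X ^ 4 - 132 * C q * X ^ 2 - 16 * C q ^ 2 := by
    simp only [derivative_mul, derivative_X, derivative_sub, derivative_C,
      map_mul, map_pow, map_ofNat, derivative_pow, derivative_ofNat]
    push_cast
    simp only [map_ofNat]
    ring
  have h1 : (C (64000 * q ^ 4)⁻¹ : ℂ[X]) * (64000 * C q ^ 4) = 1 := by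
    have : (64000 * C q ^ 4 : ℂ[X]) = C (64000 * q ^ 4) := by
      simp only [map_mul, map_pow, map_ofNat]
    rw [this, ← C_mul, inv_mul_cancel₀ (by simp [hq]), C_1]
  refine ⟨C (64000 * q ^ 4)⁻¹ * (X * (-1865 * X ^ 2 + 49456 * C q)),
    C (64000 * q ^ 4)⁻¹ * (373 * X ^ 4 - 16456 * C q * X ^ 2 - 4000 * C q ^ 2), ?_⟩
  rw [hd, ← h1]
  generalize C (64000 * q ^ 4)⁻¹ = r
  simp only [map_mul, map_pow, map_ofNat]
  ring

lemma M_sq (q : ℂ) : M q * M q =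
    !![6*q, 0, 132*q^2, 84*q^2, 0, 288*q^3;
       0, 22*q, 0, 0, 100*q^2, 0;
       1, 0, 22*q, 14*q, 0, 48*q^2;
       1, 0, 16*q, 10*q, 0, 36*q^2;
       0, 5, 0, 0, 22*q, 0;
       0, 0, 3, 2, 0, 6*q] := by
  ext i j
  fin_cases i <;> fin_cases j <;> simp [M, Matrix.mul_apply, Fin.sum_univ_succ] <;> try ring

lemma M_cube (q : ℂ) : M q * (M q * M q) =
    !![0, 252*q^2, 0, 0, 1128*q^3, 0;
       22*q, 0, 520*q^2, 332*q^2, 0, 1128*q^3;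
       0, 42*q, 0, 0, 188*q^2, 0;
       0, 32*q, 0, 0, 144*q^2, 0;
       5, 0, 116*q, 74*q, 0, 252*q^2;
       0, 5, 0, 0, 22*q, 0] := by
  rw [M_sq]
  ext i j
  fin_cases i <;> fin_cases j <;> simp [M, Matrix.mul_apply, Fin.sum_univ_succ] <;> try ring

lemma M_five (q : ℂ) :
    (M q * M q) * (M q * (M q * M q))
      = (44 * q) • (M q * (M q * M q)) + (16 * q ^ 2) • M q := by
  rw [M_cube, M_sq]
  ext i j
  fin_cases i <;> fin_cases j <;> simp [M, Matrix.mul_apply, Fin.sum_univ_succ] <;> try ring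

open Polynomial in
lemma p_aeval (q : ℂ) :
    aeval (M q).mulVecLin (X * (X ^ 4 - C (44 * q) * X ^ 2 - C (16 * q ^ 2)) : ℂ[X]) = 0 := by
  have h : aeval (M q) (X * (X ^ 4 - C (44 * q) * X ^ 2 - C (16 * q ^ 2)) : ℂ[X]) = 0 := by
    have e : (X * (X ^ 4 - C (44 * q) * X ^ 2 - C (16 * q ^ 2)) : ℂ[X])
      = (X * X) * (X * (X * X)) - (C (44 * q) * (X * (X * X)) + C (16 * q ^ 2) * X) := by ring
    rw [e]
    simp only [map_sub, map_add, map_mul (aeval (M q)), aeval_X, aeval_C, ← Algebra.smul_def]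
    rw [M_five, sub_self]
  have h2 : (M q).mulVecLin = Matrix.toLinAlgEquiv' (M q) := by
    ext; simp
  rw [h2, aeval_algEquiv, AlgHom.comp_apply, h]
  simp

lemma mem_eig (q μ : ℂ) (v : Fin 6 → ℂ) :
    v ∈ Module.End.eigenspace (M q).mulVecLin μ ↔
      6 * q * v 1 + 24 * q ^ 2 * v 4 = μ * v 0 ∧
      v 0 + 10 * q * v 2 + 6 * q * v 3 + 24 * q ^ 2 * v 5 = μ * v 1 ∧
      v 1 + 4 * q * v 4 = μ * v 2 ∧ v 1 + 2 * q * v 4 = μ * v 3 ∧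
      3 * v 2 + 2 * v 3 + 6 * q * v 5 = μ * v 4 ∧ v 4 = μ * v 5 := by
  rw [Module.End.mem_eigenspace_iff, funext_iff]
  simp [Fin.forall_fin_succ, M, Matrix.mulVec, dotProduct, Fin.sum_univ_succ, Fin.succ, ← add_assoc]

lemma eig_form (q μ : ℂ) (hμ : μ ≠ 0) (v : Fin 6 → ℂ)
    (hv : v ∈ Module.End.eigenspace (M q).mulVecLin μ) :
    v = v 5 • ![(6*q*μ^2 - 12*q^2)/5, μ*(μ^2-22*q)/5, (μ^2-2*q)/5, (μ^2-12*q)/5, μ, 1] ∧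
    v 5 * (μ ^ 4 - (44 * q * μ ^ 2 + 16 * q ^ 2)) = 0 := by
  rw [mem_eig] at hv
  obtain ⟨h0, h1, h2, h3, h4, h5⟩ := hv
  have hcd : v 2 = v 3 + 2 * q * v 5 := by
    apply mul_left_cancel₀ hμ
    linear_combination h3 - h2 + 2 * q * h5
  have e3 : v 3 = v 5 * ((μ^2-12*q)/5) := by
    linear_combination (h4 + μ * h5 - 3 * hcd) / 5
  have e2 : v 2 = v 5 * ((μ^2-2*q)/5) := by
    linear_combination hcd + e3
  have e1 : v 1 = v 5 * (μ*(μ^2-22*q)/5) := by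
    linear_combination h3 + μ * e3 - 2 * q * h5
  have e0 : v 0 = v 5 * ((6*q*μ^2 - 12*q^2)/5) := by
    apply mul_left_cancel₀ hμ
    linear_combination -h0 + 6 * q * e1 + 24 * q ^ 2 * h5
  constructor
  · ext i
    fin_cases i
    · simpa using e0
    · simpa using e1
    · simpa using e2
    · simpa using e3
    · simpa [mul_comm] using h5
    · simp
  · linear_combination -5 * (h1 - e0 - 10 * q * e2 - 6 * q * e3 + μ * e1)

lemma eig_mem (q μ : ℂ) (h : μ ^ 4 = 44 * q * μ ^ 2 + 16 * q ^ 2) :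
    ![(6*q*μ^2 - 12*q^2)/5, μ*(μ^2-22*q)/5, (μ^2-2*q)/5, (μ^2-12*q)/5, μ, 1] ∈
      Module.End.eigenspace (M q).mulVecLin μ := by
  rw [mem_eig]
  simp only [Matrix.cons_val]
  refine ⟨by ring, by linear_combination (-h) / 5, by ring, by ring, by ring, by ring⟩

lemma ker_eq (q : ℂ) : Module.End.eigenspace (M q).mulVecLin 0 =
    Submodule.span ℂ (Set.range ![![-2*q, 0, 2, -3, 0, 0], ![-6*q^2, 0, 0, -3*q, 0, 1]]) := by
  ext v
  rw [mem_eig, Matrix.range_cons, Matrix.range_cons, Matrix.range_empty, Set.union_empty,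
    Set.singleton_union, Submodule.mem_span_pair]
  constructor
  · rintro ⟨h0, h1, h2, h3, h4, h5⟩
    refine ⟨v 2 / 2, v 5, ?_⟩
    ext i
    fin_cases i
    · simp; linear_combination -h1 + 3 * q * h4
    · simp; linear_combination -h3 + 2 * q * h5
    · simp
    · simp; linear_combination -h4 / 2
    · simp; linear_combination -h5
    · simp
  · rintro ⟨a, b, rfl⟩
    simp
    constructor <;> ring

theorem M_diagonalizable_and_eigenvalues (q : ℂ) (hq : q ≠ 0) :
    (⨆ μ : ℂ, Module.End.eigenspace (M q).mulVecLin μ) = ⊤ ∧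
    {μ : ℂ | μ ≠ 0 ∧ Module.End.HasEigenvalue (M q).mulVecLin μ} =
      {μ : ℂ | μ ^ 4 = 44 * q * μ ^ 2 + 16 * q ^ 2} ∧
    Set.ncard {μ : ℂ | μ ^ 4 = 44 * q * μ ^ 2 + 16 * q ^ 2} = 4 ∧
    (∀ μ : ℂ, μ ≠ 0 → Module.End.HasEigenvalue (M q).mulVecLin μ →
      Module.finrank ℂ (Module.End.eigenspace (M q).mulVecLin μ) = 1) ∧
    Module.finrank ℂ (Module.End.eigenspace (M q).mulVecLin 0) = 2 := by
  have hroot : ∀ μ : ℂ, μ ≠ 0 → Module.End.HasEigenvalue (M q).mulVecLin μ →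
      μ ^ 4 = 44 * q * μ ^ 2 + 16 * q ^ 2 := by
    intro μ hμ h
    obtain ⟨v, hv, hv0⟩ := h.exists_hasEigenvector
    obtain ⟨h1, h2⟩ := eig_form q μ hμ v hv
    rcases mul_eq_zero.mp h2 with h3 | h3
    · rw [h3, zero_smul] at h1
      exact absurd h1 hv0
    · exact sub_eq_zero.mp h3
  have hne : ∀ μ : ℂ, (![(6*q*μ^2 - 12*q^2)/5, μ*(μ^2-22*q)/5, (μ^2-2*q)/5, (μ^2-12*q)/5, μ, 1]
      : Fin 6 → ℂ) ≠ 0 := by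
    intro μ h
    have := congrFun h 5
    simp at this
  refine ⟨?_, ?_, ?_, ?_, ?_⟩
  · have hss : Module.End.IsSemisimple (M q).mulVecLin :=
      Module.End.isSemisimple_of_squarefree_aeval_eq_zero (p_sep q hq).squarefree (p_aeval q)
    rw [← Module.End.iSup_maxGenEigenspace_eq_top (M q).mulVecLin]
    refine iSup_congr fun μ => ?_
    exact (hss.isFinitelySemisimple.maxGenEigenspace_eq_eigenspace μ).symm
  · ext μ
    constructor
    · rintro ⟨h1, h2⟩
      exact hroot μ h1 h2
    · intro h
      refine ⟨?_, Module.End.hasEigenvalue_of_hasEigenvector ⟨eig_mem q μ h, hne μ⟩⟩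
      rintro rfl
      simp [hq] at h
  · have hs := (p_sep q hq).of_mul_right
    have hd : (Polynomial.X ^ 4 - Polynomial.C (44 * q) * Polynomial.X ^ 2
        - Polynomial.C (16 * q ^ 2) : Polynomial ℂ).natDegree = 4 := by
      compute_degree!
    have hc := Polynomial.card_rootSet_eq_natDegree (K := ℂ) hs (IsAlgClosed.splits _)
    rw [hd, ← Nat.card_eq_fintype_card, Nat.card_coe_set_eq] at hc
    refine Eq.trans ?_ hc
    congr 1
    ext μ
    rw [Polynomial.mem_rootSet_of_ne hs.ne_zero]
    simp [sub_sub, sub_eq_zero]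
  · intro μ hμ h
    refine finrank_eq_one_iff'.mpr ⟨⟨_, eig_mem q μ (hroot μ hμ h)⟩, ?_, ?_⟩
    · intro h0
      exact hne μ (congrArg Subtype.val h0)
    · rintro ⟨v, hv⟩
      exact ⟨v 5, Subtype.ext (eig_form q μ hμ v hv).1.symm⟩
  · rw [ker_eq, finrank_span_eq_card, Fintype.card_fin]
    rw [LinearIndependent.pair_iff]
    intro s t h
    have h2 := congrFun h 2
    have h5 := congrFun h 5
    simp at h2 h5
    exact ⟨h2, h5⟩
end

section
/- Let q be a nonzero complex number and let M(q) be the 6×6 matrix with rows (0, 6q, 0, 0, 24q², 0), (1, 0, 10q, 6q, 0, 24q²), (0, 1, 0, 0, 4q, 0), (0, 1, 0, 0, 2q, 0), (0, 0, 3, 2, 0, 6q), (0, 0, 0, 0, 1, 0). Then the minimal polynomial of M(q) over ℂ equals X⁵ − 44q·X³ − 16q²·X; in particular ker(M(q)²) = ker(M(q)). -/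
open Polynomial

theorem M_pow_two (q : ℂ) : M q ^ 2 =
  !![6*q^1, 0, 132*q^2, 84*q^2, 0, 288*q^3;
     0, 22*q^1, 0, 0, 100*q^2, 0;
     1, 0, 22*q^1, 14*q^1, 0, 48*q^2;
     1, 0, 16*q^1, 10*q^1, 0, 36*q^2;
     0, 5, 0, 0, 22*q^1, 0;
     0, 0, 3, 2, 0, 6*q^1] := by
  rw [pow_two]
  ext i j
  fin_cases i <;> fin_cases j <;> simp [M, Matrix.mul_apply, Fin.sum_univ_succ] <;> try ring

theorem M_pow_three (q : ℂ) : M q ^ 3 =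
  !![0, 252*q^2, 0, 0, 1128*q^3, 0;
     22*q^1, 0, 520*q^2, 332*q^2, 0, 1128*q^3;
     0, 42*q^1, 0, 0, 188*q^2, 0;
     0, 32*q^1, 0, 0, 144*q^2, 0;
     5, 0, 116*q^1, 74*q^1, 0, 252*q^2;
     0, 5, 0, 0, 22*q^1, 0] := by
  rw [pow_succ, M_pow_two]
  ext i j
  fin_cases i <;> fin_cases j <;> simp [M, Matrix.mul_apply, Fin.sum_univ_succ] <;> try ring

theorem M_pow_four (q : ℂ) : M q ^ 4 =
  !![252*q^2, 0, 5904*q^3, 3768*q^3, 0, 12816*q^4;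
     0, 984*q^2, 0, 0, 4400*q^3, 0;
     42*q^1, 0, 984*q^2, 628*q^2, 0, 2136*q^3;
     32*q^1, 0, 752*q^2, 480*q^2, 0, 1632*q^3;
     0, 220*q^1, 0, 0, 984*q^2, 0;
     5, 0, 116*q^1, 74*q^1, 0, 252*q^2] := by
  rw [pow_succ, M_pow_three]
  ext i j
  fin_cases i <;> fin_cases j <;> simp [M, Matrix.mul_apply, Fin.sum_univ_succ] <;> try ring

theorem M_pow_five (q : ℂ) :
    M q ^ 5 = (44 * q) • M q ^ 3 + (16 * q ^ 2) • M q := by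
  rw [pow_succ, M_pow_four, M_pow_three]
  ext i j
  fin_cases i <;> fin_cases j <;> simp [M, Matrix.mul_apply, Fin.sum_univ_succ] <;> try ring

theorem minpoly_M (q : ℂ) (hq : q ≠ 0) :
    minpoly ℂ (M q) = X ^ 5 - C (44 * q) * X ^ 3 - C (16 * q ^ 2) * X ∧
    LinearMap.ker ((M q) ^ 2).mulVecLin = LinearMap.ker (M q).mulVecLin := by
  constructor
  · have hdeg : (X ^ 5 - C (44 * q) * X ^ 3 - C (16 * q ^ 2) * X : ℂ[X]).degree = 5 := by
      compute_degree!
    have hnat := natDegree_eq_of_degree_eq_some hdeg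
    symm
    apply minpoly.unique
    · monicity!
    · rw [map_sub, map_sub, ← smul_eq_C_mul, ← smul_eq_C_mul, map_smul, map_smul, map_pow,
        map_pow, aeval_X, M_pow_five]
      abel
    · intro p hp h0
      rw [hdeg]
      by_contra hlt
      have hlt' : p.natDegree < 5 := by
        rw [natDegree_lt_iff_degree_lt hp.ne_zero]
        exact not_le.mp hlt
      rw [aeval_eq_sum_range' hlt'] at h0
      simp only [Finset.sum_range_succ, Finset.sum_range_zero, M_pow_two, M_pow_three,
        M_pow_four, pow_zero, pow_one] at h0
      have e (i) := congrFun (congrFun h0 i) 0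
      have c4 : p.coeff 4 = 0 := by simpa [M] using e 5
      have c3 : p.coeff 3 = 0 := by simpa [M, c4] using e 4
      have c2 : p.coeff 2 = 0 := by simpa [M, c4, c3] using e 2
      have c1 : p.coeff 1 = 0 := by simpa [M, c4, c3, c2] using e 1
      have c0 : p.coeff 0 = 0 := by simpa [M, c4, c3, c2, c1] using e 0
      have hl := hp.coeff_natDegree
      interval_cases p.natDegree <;> simp_all
  · ext v
    simp only [LinearMap.mem_ker, Matrix.mulVecLin_apply]
    constructor
    · intro h
      have h3 : (M q ^ 3).mulVec v = 0 := by
        rw [pow_succ', ← Matrix.mulVec_mulVec, h, Matrix.mulVec_zero]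
      have h5 : (M q ^ 5).mulVec v = 0 := by
        rw [show 5 = 3 + 2 from rfl, pow_add, ← Matrix.mulVec_mulVec, h, Matrix.mulVec_zero]
      rw [M_pow_five, Matrix.add_mulVec, Matrix.smul_mulVec, Matrix.smul_mulVec, h3] at h5
      simpa [hq] using h5
    · intro h
      rw [pow_two, ← Matrix.mulVec_mulVec, h, Matrix.mulVec_zero]
end

section
/- Let R be the commutative ring ℚ[h, H, α]/(h², H³ − αh − 2αH + hH², α² − αhH − αH²). Then in R the identities α²h = αhH², α²H = −αhH², and (α + hH)(4hH² + 8αh + 4αH) = 12·αhH² hold. -/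
open MvPolynomial

/-- The ideal (h², H³ − αh − 2αH + hH², α² − αhH − αH²) in ℚ[h, H, α],
with h = X 0, H = X 1, α = X 2, encoding the intersection theory of the
fivefold Σ = G(2, V₅/𝒪(−1)) over ℙ¹. -/
noncomputable def sigmaIdeal : Ideal (MvPolynomial (Fin 3) ℚ) :=
  Ideal.span
    { (X 0 : MvPolynomial (Fin 3) ℚ) ^ 2,
      (X 1 : MvPolynomial (Fin 3) ℚ) ^ 3 - X 2 * X 0 - 2 * X 2 * X 1 + X 0 * (X 1) ^ 2,
      (X 2 : MvPolynomial (Fin 3) ℚ) ^ 2 - X 2 * X 0 * X 1 - X 2 * (X 1) ^ 2 }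

/-- The intersection ring of Σ. -/
abbrev CohSigma : Type := MvPolynomial (Fin 3) ℚ ⧸ sigmaIdeal

/-- The class of h. -/
noncomputable def hS : CohSigma := Ideal.Quotient.mk sigmaIdeal (X 0)

/-- The class of H. -/
noncomputable def HS : CohSigma := Ideal.Quotient.mk sigmaIdeal (X 1)

/-- The class of α. -/
noncomputable def aS : CohSigma := Ideal.Quotient.mk sigmaIdeal (X 2)

theorem J12_computation :
    aS ^ 2 * hS = aS * hS * HS ^ 2 ∧
    aS ^ 2 * HS = -(aS * hS * HS ^ 2) ∧
    (aS + hS * HS) * (4 * hS * HS ^ 2 + 8 * aS * hS + 4 * aS * HS) =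
      12 * (aS * hS * HS ^ 2) := by
  have r1 : hS ^ 2 = 0 := by
    unfold hS
    rw [← map_pow]
    exact Ideal.Quotient.eq_zero_iff_mem.mpr (Ideal.subset_span (by simp))
  have r2 : HS ^ 3 - aS * hS - 2 * aS * HS + hS * HS ^ 2 = 0 := by
    have := Ideal.Quotient.eq_zero_iff_mem.mpr
      (show (X 1 : MvPolynomial (Fin 3) ℚ) ^ 3 - X 2 * X 0 - 2 * X 2 * X 1 + X 0 * (X 1) ^ 2
        ∈ sigmaIdeal from Ideal.subset_span (by simp))
    simpa only [hS, HS, aS, map_add, map_sub, map_mul, map_pow, map_ofNat] using this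
  have r3 : aS ^ 2 - aS * hS * HS - aS * HS ^ 2 = 0 := by
    have := Ideal.Quotient.eq_zero_iff_mem.mpr
      (show (X 2 : MvPolynomial (Fin 3) ℚ) ^ 2 - X 2 * X 0 * X 1 - X 2 * (X 1) ^ 2
        ∈ sigmaIdeal from Ideal.subset_span (by simp))
    simpa only [hS, HS, aS, map_add, map_sub, map_mul, map_pow, map_ofNat] using this
  generalize hS = h at *
  generalize HS = H at *
  generalize aS = a at *
  have e1 : a ^ 2 * h = a * h * H ^ 2 := by
    linear_combination h * r3 + a * H * r1
  have e2 : a ^ 2 * H = -(a * h * H ^ 2) := by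
    linear_combination -(H * r3) - a * r2 - e1
  refine ⟨e1, e2, ?_⟩
  linear_combination 8 * e1 + 4 * e2 + (4 * H ^ 3 + 8 * a * H) * r1
end
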